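/- Let φ : V_+ → ℂ be radial with profile F and not identically zero. Then the following are equivalent: (a) φ(v_0) = 1 and M_2 φ = F(2)·φ on V_+; (b) for all finitely supported F_1, G_1 : ℕ → ℂ, Σ_{v ∈ V_+} (F_1★G_1)(v)·φ(v) = (Σ_{v ∈ V_+} F_1(|v|)·φ(v))·(Σ_{v ∈ V_+} G_1(|v|)·φ(v)), where (F_1★G_1)(v) = Σ_{w ∈ V_+} F_1(dist(v,w))·G_1(|w|). -/

import Mathlib

open scoped BigOperators ComplexOrder

/-- A semi-homogeneous tree `T_{q_+,q_-}`: a connected acyclic simple graph with a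
parity function `eps` (true = `+`, false = `−`) that flips across edges, in which every
vertex of parity `+` has exactly `qp + 1` neighbors and every vertex of parity `−` has
exactly `qm + 1` neighbors.  Spheres are finite (this follows from local finiteness
and connectedness, and is recorded as a field for convenience). -/
structure SemiHomTree (qp qm : ℕ) (V : Type) where
  G : SimpleGraph V
  connected : G.Connected
  acyclic : G.IsAcyclic
  eps : V → Bool
  adj_parity : ∀ ⦃v w : V⦄, G.Adj v w → eps w = !eps v
  nbr_finite : ∀ v : V, {w : V | G.Adj v w}.Finite
  degree_plus : ∀ v : V, eps v = true → {w : V | G.Adj v w}.ncard = qp + 1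
  degree_minus : ∀ v : V, eps v = false → {w : V | G.Adj v w}.ncard = qm + 1
  sphere_finite : ∀ (v : V) (n : ℕ), {w : V | G.dist v w = n}.Finite

/-- The averaging operator `M_n`: average of `f` over the sphere of radius `n` around `v`. -/
noncomputable def Mop {qp qm : ℕ} {V : Type} (T : SemiHomTree qp qm V)
    (n : ℕ) (f : V → ℂ) (v : V) : ℂ :=
  (({w : V | T.G.dist v w = n}.ncard : ℂ))⁻¹ * ∑ᶠ w ∈ {w : V | T.G.dist v w = n}, f w

/-- The Laplace operator `μ₁`: the average of `f` over the neighbors of `v`. -/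
noncomputable def lap {qp qm : ℕ} {V : Type} (T : SemiHomTree qp qm V)
    (f : V → ℂ) (v : V) : ℂ :=
  (((if T.eps v then qp else qm : ℕ) : ℂ) + 1)⁻¹ * ∑ᶠ w ∈ {w : V | T.G.Adj v w}, f w

/-!
Write `δ_n` for the indicator of `{n}`, and for finitely supported `F : ℕ → R` let `A_F` be the
operator with radial kernel `F (d x y)` on functions on `V_+`. By Fubini, `∑ (F ★ G) φ` equals
`A_G (A_F φ)` evaluated at the root `o`, so (b) says `A_G (A_F φ) o = A_F φ o * A_G φ o`.

Counting neighbours in the tree shows that `A_{δ_2}` sends radial functions to radial functions and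
that `A_{δ_2} A_{δ_{2n}}` is `A_{δ_{2n+2}}` plus a combination of `A_{δ_{2n}}` and `A_{δ_{2n-2}}`.
Hence an eigenfunction of `A_{δ_2}` is an eigenfunction of every `A_F`, which gives (b) when
`φ o = 1`. Conversely, if `A_F φ` is radial, then (b) with `G = δ_n` averages over the sphere of
radius `n` and yields `A_F φ x = A_F φ o * φ x` there; take `F = δ_0` and `F = δ_2`.
-/

open Finsupp (single)

section RadialOp

variable {X R : Type*}

/-- The operator with radial kernel `F (d x y)`, where `d` is a discrete distance on `X`. The kernel
`single n 1` gives the sum over the sphere of radius `n`. -/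
noncomputable def radialOp [CommSemiring R] (d : X → X → ℕ) (F : ℕ →₀ R) (f : X → R) (x : X) : R :=
  ∑ᶠ y, F (d x y) * f y

/-- Multiplicativity of the functional `F ↦ ∑ᶠ x, F (d o x) * φ x` for the convolution of radial
kernels; by `radialOp_radialOp` the left-hand side is the value of this functional at the
convolution of `F` and `G`. -/
def IsRadialMultiplicative [CommSemiring R] (d : X → X → ℕ) (o : X) (φ : X → R) : Prop :=
  ∀ F G : ℕ →₀ R, radialOp d G (radialOp d F φ) o = radialOp d F φ o * radialOp d G φ o

section CommSemiring

variable [CommSemiring R] {d : X → X → ℕ}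

lemma finite_support_radialKernel (hd : ∀ x n, {y | d x y = n}.Finite) (F : ℕ →₀ R) (x : X) :
    (Function.support fun y => F (d x y)).Finite :=
  F.hasFiniteSupport.preimage' fun n _ => hd x n

lemma hasFiniteSupport_radialKernel_mul (hd : ∀ x n, {y | d x y = n}.Finite) (F : ℕ →₀ R)
    (f : X → R) (x : X) : Function.HasFiniteSupport fun y => F (d x y) * f y :=
  (finite_support_radialKernel hd F x).subset (Function.support_mul_subset_left _ _)

lemma radialOp_add (hd : ∀ x n, {y | d x y = n}.Finite) (F G : ℕ →₀ R) (f : X → R) :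
    radialOp d (F + G) f = radialOp d F f + radialOp d G f := by
  funext x
  simp only [radialOp, Finsupp.add_apply, add_mul, Pi.add_apply]
  exact finsum_add_distrib (hasFiniteSupport_radialKernel_mul hd F f x)
    (hasFiniteSupport_radialKernel_mul hd G f x)

lemma radialOp_smul (hd : ∀ x n, {y | d x y = n}.Finite) (c : R) (F : ℕ →₀ R) (f : X → R) :
    radialOp d (c • F) f = c • radialOp d F f := by
  funext x
  simp only [radialOp, Finsupp.smul_apply, Pi.smul_apply, smul_eq_mul, mul_assoc]
  exact (mul_finsum' _ c (hasFiniteSupport_radialKernel_mul hd F f x)).symm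

lemma radialOp_apply_smul (hd : ∀ x n, {y | d x y = n}.Finite) (F : ℕ →₀ R) (c : R) (f : X → R) :
    radialOp d F (c • f) = c • radialOp d F f := by
  funext x
  simp only [radialOp, Pi.smul_apply, smul_eq_mul, mul_left_comm _ c]
  exact (mul_finsum' _ c (hasFiniteSupport_radialKernel_mul hd F f x)).symm

lemma radialOp_single_zero (hd₀ : ∀ x y, d x y = 0 ↔ x = y) (f : X → R) :
    radialOp d (single 0 1) f = f := by
  funext x
  rw [radialOp, finsum_eq_single _ x]
  · simp [(hd₀ x x).2 rfl]
  · intro y hy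
    rw [Finsupp.single_eq_of_ne ((hd₀ x y).not.2 hy.symm), zero_mul]

lemma radialOp_single_eq_finsum_mem (n : ℕ) (f : X → R) (x : X) :
    radialOp d (single n 1) f x = ∑ᶠ y ∈ {y | d x y = n}, f y := by
  rw [radialOp, finsum_mem_def]
  refine finsum_congr fun y => ?_
  by_cases h : d x y = n
  · rw [h, Finsupp.single_eq_same, one_mul, Set.indicator_of_mem (s := {y | d x y = n}) h]
  · rw [Finsupp.single_eq_of_ne h, zero_mul, Set.indicator_of_notMem (s := {y | d x y = n}) h]

lemma radialOp_single_of_const_on_sphere (hd : ∀ x n, {y | d x y = n}.Finite) {f : X → R} {n : ℕ}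
    {x : X} {c : R} (hf : ∀ y, d x y = n → f y = c) :
    radialOp d (single n 1) f x = {y | d x y = n}.ncard * c := by
  rw [radialOp_single_eq_finsum_mem, finsum_mem_congr (s := {y | d x y = n}) rfl hf,
    finsum_mem_eq_finite_toFinset_sum _ (hd x n), Finset.sum_const, nsmul_eq_mul,
    Set.ncard_eq_toFinset_card _ (hd x n)]

lemma radialOp_radialOp (hd : ∀ x n, {y | d x y = n}.Finite) (hcomm : ∀ x y, d x y = d y x)
    (F G : ℕ →₀ R) (f : X → R) (x : X) :
    radialOp d G (radialOp d F f) x = ∑ᶠ y, (∑ᶠ z, F (d y z) * G (d x z)) * f y := by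
  have hG := finite_support_radialKernel hd G x
  have restrict {g : X → R} (hg : ∀ z, G (d x z) = 0 → g z = 0) :
      ∑ᶠ z, g z = ∑ z ∈ hG.toFinset, g z :=
    finsum_eq_sum_of_support_subset g fun z hz => by
      simpa using fun h => hz (hg z h)
  calc
    _ = ∑ z ∈ hG.toFinset, ∑ᶠ y, F (d z y) * (G (d x z) * f y) := by
      rw [radialOp, restrict fun z hz => by rw [hz, zero_mul]]
      refine Finset.sum_congr rfl fun z _ => ?_
      simp only [mul_left_comm (F _)]
      exact mul_finsum' _ _ (hasFiniteSupport_radialKernel_mul hd F f z)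
    _ = ∑ᶠ y, ∑ z ∈ hG.toFinset, F (d z y) * (G (d x z) * f y) :=
      (finsum_sum_comm _ _ fun z _ => hasFiniteSupport_radialKernel_mul hd F _ z).symm
    _ = _ := finsum_congr fun y => by
      rw [restrict fun z hz => by rw [hz, mul_zero], Finset.sum_mul]
      exact Finset.sum_congr rfl fun z _ => by rw [hcomm z y, mul_assoc]

lemma isRadialMultiplicative_of_forall_exists_eigenvalue (hd : ∀ x n, {y | d x y = n}.Finite)
    {o : X} {φ : X → R} (ho : φ o = 1) (h : ∀ F, ∃ c : R, radialOp d F φ = c • φ) :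
    IsRadialMultiplicative d o φ := by
  intro F G
  obtain ⟨a, ha⟩ := h F
  obtain ⟨b, hb⟩ := h G
  simp [ha, hb, radialOp_apply_smul hd, ho]

end CommSemiring

namespace IsRadialMultiplicative

variable [CommRing R] [IsDomain R] [CharZero R] {d : X → X → ℕ} {o x : X} {φ : X → R}

lemma radialOp_eq (h : IsRadialMultiplicative d o φ) (hd : ∀ x n, {y | d x y = n}.Finite)
    (hφ : ∀ y, d o y = d o x → φ y = φ x) {F : ℕ →₀ R}
    (hF : ∀ y, d o y = d o x → radialOp d F φ y = radialOp d F φ x) :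
    radialOp d F φ x = radialOp d F φ o * φ x := by
  have hcard : ({y | d o y = d o x}.ncard : R) ≠ 0 :=
    Nat.cast_ne_zero.2 (Set.ncard_ne_zero_of_mem (a := x) rfl (hd _ _))
  have key := h F (single (d o x) 1)
  rw [radialOp_single_of_const_on_sphere hd hF, radialOp_single_of_const_on_sphere hd hφ] at key
  exact mul_left_cancel₀ hcard (key.trans (mul_left_comm _ _ _))

lemma apply_base_eq_one (h : IsRadialMultiplicative d o φ) (hd : ∀ x n, {y | d x y = n}.Finite)
    (hd₀ : ∀ x y, d x y = 0 ↔ x = y) (hφ : ∀ y, d o y = d o x → φ y = φ x) (hx : φ x ≠ 0) :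
    φ o = 1 := by
  have key := h.radialOp_eq hd hφ (F := single 0 1)
  simp only [radialOp_single_zero hd₀] at key
  exact (mul_eq_right₀ hx).1 (key hφ).symm

end IsRadialMultiplicative

end RadialOp

section Tree

variable {V R : Type*} {G : SimpleGraph V}

lemma existsUnique_adj_dist_eq_add_one (hG : G.IsTree) {v w : V} (hvw : v ≠ w) :
    ∃! u, G.Adj w u ∧ G.dist v w = G.dist v u + 1 := by
  obtain ⟨p, hp, hlen⟩ := hG.connected.exists_path_of_dist w v
  have hnil : ¬p.Nil := fun h => hvw h.eq.symm
  have hadj : G.Adj w p.snd := p.adj_snd hnil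
  refine ⟨p.snd, ⟨hadj, ?_⟩, fun u ⟨hu, hdist⟩ => ?_⟩
  · have hle : G.dist p.snd v ≤ p.tail.length := SimpleGraph.dist_le _
    have htail := SimpleGraph.Walk.length_tail_add_one hnil
    have := hG.dist_eq_dist_add_one_of_adj v hadj
    rw [SimpleGraph.dist_comm] at hlen hle
    omega
  · obtain ⟨q, hq⟩ := hG.connected.exists_walk_length_eq_dist u v
    have hpath : (SimpleGraph.Walk.cons hu q).IsPath := by
      apply SimpleGraph.Walk.isPath_of_length_eq_dist
      rw [SimpleGraph.Walk.length_cons, hq, SimpleGraph.dist_comm, ← hdist, SimpleGraph.dist_comm]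
    rw [← (hG.existsUnique_path w v).unique hpath hp, SimpleGraph.Walk.snd_cons]

lemma sum_neighborFinset_dist [CommRing R] (hG : G.IsTree) {v w : V} [Fintype (G.neighborSet w)]
    (hvw : v ≠ w) (H : ℕ → R) :
    ∑ u ∈ G.neighborFinset w, H (G.dist v u) =
      H (G.dist v w - 1) + (G.degree w - 1) * H (G.dist v w + 1) := by
  classical
  obtain ⟨p, ⟨hadj, hp⟩, hunique⟩ := existsUnique_adj_dist_eq_add_one hG hvw
  have hmem : p ∈ G.neighborFinset w := (G.mem_neighborFinset w p).2 hadj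
  have hfar : ∀ u ∈ (G.neighborFinset w).erase p, H (G.dist v u) = H (G.dist v w + 1) := by
    intro u hu
    obtain ⟨hne, hu⟩ := Finset.mem_erase.1 hu
    rw [G.mem_neighborFinset] at hu
    exact congrArg H ((hG.dist_eq_dist_add_one_of_adj v hu).resolve_left
      fun h => hne (hunique u ⟨hu, h⟩))
  rw [← Finset.add_sum_erase _ _ hmem, Finset.sum_congr rfl hfar, Finset.sum_const,
    nsmul_eq_mul, Finset.cast_card_erase_of_mem hmem, G.card_neighborFinset_eq_degree, hp,
    Nat.add_sub_cancel]

lemma finsum_mem_sphere_two [AddCommGroup R] (hG : G.IsTree) [G.LocallyFinite] (f : V → R) (w : V) :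
    ∑ᶠ z ∈ {z | G.dist w z = 2}, f z =
      (∑ u ∈ G.neighborFinset w, ∑ z ∈ G.neighborFinset u, f z) - G.degree w • f w := by
  classical
  have hsphere : {z | G.dist w z = 2} =
      ((G.neighborFinset w).biUnion fun u => (G.neighborFinset u).erase w : Finset V) := by
    ext z
    simp only [Set.mem_ofPred_eq, Finset.coe_biUnion, Set.mem_iUnion, Finset.mem_coe,
      Finset.mem_erase, SimpleGraph.mem_neighborFinset, exists_prop]
    refine ⟨fun hz => ?_, fun ⟨u, hwu, hne, huz⟩ => ?_⟩
    · have hne : w ≠ z := by rintro rfl; simp at hz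
      obtain ⟨u, ⟨hzu, hu⟩, -⟩ := existsUnique_adj_dist_eq_add_one hG hne
      exact ⟨u, SimpleGraph.dist_eq_one_iff_adj.1 (by omega), hne.symm, hzu.symm⟩
    · have hu := SimpleGraph.dist_eq_one_iff_adj.2 hwu
      have hz := hG.connected.dist_eq_zero_iff.not.2 hne.symm
      have := hG.dist_eq_dist_add_one_of_adj w huz
      omega
  have hdisj : (G.neighborFinset w : Set V).PairwiseDisjoint
      fun u => (G.neighborFinset u).erase w := by
    intro u hu u' hu' hne
    refine Finset.disjoint_left.2 fun z hz hz' => hne ?_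
    have hz2 : G.dist w z = 2 := hsphere.ge (Finset.mem_coe.2 (Finset.mem_biUnion.2 ⟨u, hu, hz⟩))
    simp only [Finset.mem_coe, Finset.mem_erase, SimpleGraph.mem_neighborFinset] at hu hu' hz hz'
    exact (existsUnique_adj_dist_eq_add_one hG hz.1.symm).unique
      ⟨hz.2.symm, by rw [hz2, SimpleGraph.dist_eq_one_iff_adj.2 hu]⟩
      ⟨hz'.2.symm, by rw [hz2, SimpleGraph.dist_eq_one_iff_adj.2 hu']⟩
  have herase : ∀ u ∈ G.neighborFinset w,
      ∑ z ∈ (G.neighborFinset u).erase w, f z = ∑ z ∈ G.neighborFinset u, f z - f w :=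
    fun u hu => Finset.sum_erase_eq_sub (by simpa [SimpleGraph.adj_comm] using hu)
  rw [hsphere, finsum_mem_coe_finset, Finset.sum_biUnion hdisj, Finset.sum_congr rfl herase,
    Finset.sum_sub_distrib, Finset.sum_const, G.card_neighborFinset_eq_degree]

end Tree

/-- The action of the distance-two sum on radial profiles: if `f z = H (dist v z)` on the
`+`-vertices of `T_{q_+,q_-}`, then the sum of `f` over the sphere of radius two around a `+`-vertex
at distance `k` from `v` is `twoStep qp qm H k`. Distances between `+`-vertices are even, so the
value at `1` is arbitrary. -/
def twoStep {R : Type*} [CommRing R] (qp qm : ℕ) (H : ℕ → R) : ℕ → R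
  | 0 => (qp + 1) * qm * H 2
  | 1 => 0
  | k + 2 => H k + (qm - 1) * H (k + 2) + qp * qm * H (k + 4)

lemma exists_twoStep_single_eq {R : Type*} [CommRing R] (qp qm n : ℕ) :
    ∃ a b : R, ∀ k, Even k → twoStep qp qm (single (2 * n + 2) 1) k =
      (single (2 * n + 4) 1 + a • single (2 * n + 2) 1 + b • single (2 * n) 1 : ℕ →₀ R) k := by
  refine ⟨qm - 1, if n = 0 then (qp + 1) * qm else qp * qm, fun k hk => ?_⟩
  match k with
  | 0 => cases n <;> simp [twoStep]
  | 1 => exact absurd hk (by decide)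
  | k + 2 =>
    simp only [twoStep, Finsupp.add_apply, Finsupp.smul_apply, Finsupp.single_apply, smul_eq_mul]
    grind

namespace SemiHomTree

variable {qp qm : ℕ} {V : Type} {R : Type*} (T : SemiHomTree qp qm V)

lemma isTree : T.G.IsTree := ⟨T.connected, T.acyclic⟩

noncomputable instance : T.G.LocallyFinite := fun v => (T.nbr_finite v).fintype

lemma degree_of_plus {v : V} (hv : T.eps v = true) : T.G.degree v = qp + 1 := by
  rw [← T.degree_plus v hv, ← T.G.card_neighborFinset_eq_degree, ← Set.ncard_coe_finset,
    T.G.coe_neighborFinset]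
  rfl

lemma degree_of_minus {v : V} (hv : T.eps v = false) : T.G.degree v = qm + 1 := by
  rw [← T.degree_minus v hv, ← T.G.card_neighborFinset_eq_degree, ← Set.ncard_coe_finset,
    T.G.coe_neighborFinset]
  rfl

lemma even_dist_iff (v w : V) : Even (T.G.dist v w) ↔ T.eps v = T.eps w := by
  obtain ⟨p, hp⟩ := T.connected.exists_walk_length_eq_dist v w
  let c : T.G.Coloring Bool := .mk T.eps fun h => by simp [T.adj_parity h]
  rw [← hp, c.even_length_iff_congr p, ← Bool.eq_iff_iff]
  rfl

lemma finsum_mem_sphere_two_dist [CommRing R] {v w : V} (hv : T.eps v = true)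
    (hw : T.eps w = true) (H : ℕ → R) :
    ∑ᶠ z ∈ {z | T.G.dist w z = 2}, H (T.G.dist v z) = twoStep qp qm H (T.G.dist v w) := by
  have hminus : ∀ u ∈ T.G.neighborFinset w, T.eps u = false := by
    intro u hu
    rw [T.adj_parity ((T.G.mem_neighborFinset w u).1 hu), hw, Bool.not_true]
  have hinner : ∀ u ∈ T.G.neighborFinset w, ∑ z ∈ T.G.neighborFinset u, H (T.G.dist v z) =
      H (T.G.dist v u - 1) + qm * H (T.G.dist v u + 1) := by
    intro u hu
    have hvu : v ≠ u := by
      rintro rfl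
      simp [hminus v hu] at hv
    rw [sum_neighborFinset_dist T.isTree hvu, T.degree_of_minus (hminus u hu), Nat.cast_add_one,
      add_sub_cancel_right]
  rw [finsum_mem_sphere_two T.isTree, Finset.sum_congr rfl hinner, T.degree_of_plus hw]
  rcases eq_or_ne v w with rfl | hvw
  · have hone : ∀ u ∈ T.G.neighborFinset v, T.G.dist v u = 1 := fun u hu =>
      SimpleGraph.dist_eq_one_iff_adj.2 ((T.G.mem_neighborFinset v u).1 hu)
    rw [Finset.sum_congr rfl fun u hu => by rw [hone u hu]]
    simp only [Finset.sum_const, SimpleGraph.card_neighborFinset_eq_degree, T.degree_of_plus hw,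
      SimpleGraph.dist_self, twoStep, Nat.reduceAdd, tsub_self, nsmul_eq_mul, Nat.cast_add_one]
    ring
  · obtain ⟨k, hk⟩ : ∃ k, T.G.dist v w = k + 2 := by
      have hpos := T.connected.pos_dist_of_ne hvw
      obtain ⟨m, hm⟩ := (T.even_dist_iff v w).2 (hv.trans hw.symm)
      exact ⟨2 * m - 2, by omega⟩
    rw [sum_neighborFinset_dist T.isTree hvw fun j => H (j - 1) + qm * H (j + 1),
      T.degree_of_plus hw, hk]
    simp only [twoStep, Nat.add_one_sub_one, add_tsub_cancel_right, Nat.cast_add_one, nsmul_eq_mul]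
    ring

/-- The vertices of parity `+`. -/
abbrev Plus : Type := {v : V | T.eps v = true}

/-- The graph distance on the vertices of parity `+`; it takes even values only. -/
noncomputable def plusDist (x y : T.Plus) : ℕ := T.G.dist (x : V) y

lemma even_plusDist (x y : T.Plus) : Even (T.plusDist x y) :=
  (T.even_dist_iff x y).2 (x.2.trans y.2.symm)

lemma plusDist_comm (x y : T.Plus) : T.plusDist x y = T.plusDist y x :=
  SimpleGraph.dist_comm

lemma plusDist_eq_zero_iff (x y : T.Plus) : T.plusDist x y = 0 ↔ x = y :=
  T.connected.dist_eq_zero_iff.trans Subtype.coe_inj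

lemma finite_plusDist_sphere (x : T.Plus) (n : ℕ) : {y | T.plusDist x y = n}.Finite :=
  (T.sphere_finite x n).preimage Subtype.val_injective.injOn

lemma radialOp_single_even [CommSemiring R] {n : ℕ} (hn : Even n) (f : V → R) (x : T.Plus) :
    radialOp T.plusDist (single n 1) (fun y => f y) x = ∑ᶠ z ∈ {z | T.G.dist x z = n}, f z := by
  refine (finsum_set_coe_eq_finsum_mem (s := {v | T.eps v = true})
    (f := fun z => single n 1 (T.G.dist x z) * f z)).trans ?_
  rw [finsum_mem_def, finsum_mem_def]
  refine finsum_congr fun z => ?_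
  by_cases hz : T.G.dist x z = n
  · have hplus : T.eps z = true := ((T.even_dist_iff x z).1 (hz ▸ hn)).symm.trans x.2
    rw [Set.indicator_of_mem (s := {v | T.eps v = true}) hplus,
      Set.indicator_of_mem (s := {z | T.G.dist x z = n}) hz, hz, Finsupp.single_eq_same, one_mul]
  · rw [Set.indicator_of_notMem (s := {z | T.G.dist x z = n}) hz, Set.indicator_apply_eq_zero]
    exact fun _ => by rw [Finsupp.single_eq_of_ne hz, zero_mul]

lemma radialOp_single_odd [CommSemiring R] {n : ℕ} (hn : Odd n) (f : T.Plus → R) :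
    radialOp T.plusDist (single n 1) f = 0 := by
  funext x
  refine finsum_eq_zero_of_forall_eq_zero fun y => ?_
  have hne : T.plusDist x y ≠ n := fun h => Nat.not_even_iff_odd.2 hn (h ▸ T.even_plusDist x y)
  rw [Finsupp.single_eq_of_ne hne, zero_mul]

section CommRing

variable [CommRing R]

lemma radialOp_two_radial (v x : T.Plus) (H : ℕ → R) :
    radialOp T.plusDist (single 2 1) (fun y => H (T.plusDist v y)) x =
      twoStep qp qm H (T.plusDist v x) :=
  (T.radialOp_single_even even_two (fun z => H (T.G.dist v z)) x).trans
    (T.finsum_mem_sphere_two_dist v.2 x.2 H)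

lemma radialOp_two_radialOp (F : ℕ →₀ R) (f : T.Plus → R) (x : T.Plus) :
    radialOp T.plusDist (single 2 1) (radialOp T.plusDist F f) x =
      ∑ᶠ y, twoStep qp qm F (T.plusDist x y) * f y := by
  rw [radialOp_radialOp T.finite_plusDist_sphere T.plusDist_comm]
  refine finsum_congr fun y => ?_
  rw [T.plusDist_comm x y, ← T.radialOp_two_radial y x F, radialOp]
  simp only [mul_comm]

lemma exists_radialOp_two_radialOp_single_eq (n : ℕ) (f : T.Plus → R) : ∃ a b : R,
    radialOp T.plusDist (single 2 1) (radialOp T.plusDist (single (2 * n + 2) 1) f) =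
      radialOp T.plusDist (single (2 * n + 4) 1) f +
        a • radialOp T.plusDist (single (2 * n + 2) 1) f +
        b • radialOp T.plusDist (single (2 * n) 1) f := by
  obtain ⟨a, b, hab⟩ := exists_twoStep_single_eq (R := R) qp qm n
  refine ⟨a, b, ?_⟩
  simp only [← radialOp_smul T.finite_plusDist_sphere, ← radialOp_add T.finite_plusDist_sphere]
  funext x
  rw [T.radialOp_two_radialOp, radialOp]
  exact finsum_congr fun y => by rw [hab _ (T.even_plusDist x y)]

lemma exists_eigenvalue_single_even {κ : R} {φ : T.Plus → R}
    (hφ : radialOp T.plusDist (single 2 1) φ = κ • φ) (n : ℕ) :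
    ∃ c : R, radialOp T.plusDist (single (2 * n) 1) φ = c • φ := by
  induction n using Nat.twoStepInduction with
  | zero => exact ⟨1, by rw [mul_zero, radialOp_single_zero T.plusDist_eq_zero_iff, one_smul]⟩
  | one => exact ⟨κ, hφ⟩
  | more n ih₀ ih₁ =>
    obtain ⟨c₀, h₀⟩ := ih₀
    obtain ⟨c₁, h₁⟩ := ih₁
    obtain ⟨a, b, hrec⟩ := T.exists_radialOp_two_radialOp_single_eq n φ
    rw [mul_add_one] at h₁
    rw [h₀, h₁, radialOp_apply_smul T.finite_plusDist_sphere, hφ] at hrec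
    refine ⟨c₁ * κ - a * c₁ - b * c₀, ?_⟩
    rw [show 2 * (n + 2) = 2 * n + 4 by ring]
    rw [sub_smul, sub_smul, mul_smul, mul_smul, mul_smul, hrec]
    abel

lemma exists_eigenvalue {κ : R} {φ : T.Plus → R}
    (hφ : radialOp T.plusDist (single 2 1) φ = κ • φ) (F : ℕ →₀ R) :
    ∃ c : R, radialOp T.plusDist F φ = c • φ := by
  induction F using Finsupp.induction_linear with
  | zero => exact ⟨0, by funext x; simp [radialOp]⟩
  | add F G hF hG =>
    obtain ⟨a, ha⟩ := hF
    obtain ⟨b, hb⟩ := hG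
    exact ⟨a + b, by rw [radialOp_add T.finite_plusDist_sphere, ha, hb, add_smul]⟩
  | single n r =>
    suffices h : ∃ c : R, radialOp T.plusDist (single n 1) φ = c • φ by
      obtain ⟨c, hc⟩ := h
      refine ⟨r * c, ?_⟩
      rw [← mul_one r, ← smul_eq_mul r 1, ← Finsupp.smul_single,
        radialOp_smul T.finite_plusDist_sphere, hc, smul_smul, smul_eq_mul, mul_one]
    rcases Nat.even_or_odd n with hn | hn
    · obtain ⟨m, rfl⟩ := hn.two_dvd
      exact T.exists_eigenvalue_single_even hφ m
    · exact ⟨0, by rw [T.radialOp_single_odd hn, zero_smul]⟩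

theorem isRadialMultiplicative_iff [IsDomain R] [CharZero R] {o : T.Plus} {F : ℕ → R}
    {φ : T.Plus → R} (hφ : φ = fun y => F (T.plusDist o y)) (hne : φ ≠ 0) :
    IsRadialMultiplicative T.plusDist o φ ↔
      φ o = 1 ∧ radialOp T.plusDist (single 2 1) φ = twoStep qp qm F 0 • φ := by
  refine ⟨fun h => ?_, fun ⟨ho, heig⟩ =>
    isRadialMultiplicative_of_forall_exists_eigenvalue T.finite_plusDist_sphere ho
      (T.exists_eigenvalue heig)⟩
  have hrad : ∀ x y, T.plusDist o y = T.plusDist o x → φ y = φ x := fun x y hxy => by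
    simp only [hφ, hxy]
  have htwo : ∀ x, radialOp T.plusDist (single 2 1) φ x = twoStep qp qm F (T.plusDist o x) :=
    fun x => by rw [hφ, T.radialOp_two_radial]
  obtain ⟨x, hx⟩ := Function.ne_iff.1 hne
  refine ⟨h.apply_base_eq_one T.finite_plusDist_sphere T.plusDist_eq_zero_iff (hrad x) hx, ?_⟩
  funext x
  rw [h.radialOp_eq T.finite_plusDist_sphere (hrad x) fun y hxy => by rw [htwo, htwo, hxy],
    htwo o, (T.plusDist_eq_zero_iff o o).2 rfl, Pi.smul_apply, smul_eq_mul]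

end CommRing

lemma ncard_sphere_two {v : V} (hv : T.eps v = true) :
    {w | T.G.dist v w = 2}.ncard = (qp + 1) * qm := by
  have h := T.finsum_mem_sphere_two_dist hv hv fun _ => (1 : ℤ)
  rw [SimpleGraph.dist_self, finsum_mem_eq_finite_toFinset_sum _ (T.sphere_finite v 2),
    Finset.sum_const, nsmul_eq_mul, mul_one, ← Set.ncard_eq_toFinset_card _ (T.sphere_finite v 2),
    twoStep, mul_one] at h
  exact_mod_cast h

lemma forall_Mop_two_eq_iff (hqm : qm ≠ 0) (φ : V → ℂ) (c : ℂ) :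
    (∀ v, T.eps v = true → Mop T 2 φ v = c * φ v) ↔
      radialOp T.plusDist (single 2 1) (fun y => φ y) =
        ((qp + 1) * qm * c) • fun y : T.Plus => φ y := by
  have hN : ((qp + 1) * qm : ℂ) ≠ 0 := by exact_mod_cast mul_ne_zero qp.succ_ne_zero hqm
  rw [funext_iff, Subtype.forall]
  refine forall₂_congr fun v hv => ?_
  rw [Mop, T.ncard_sphere_two hv, T.radialOp_single_even even_two]
  push_cast
  rw [inv_mul_eq_iff_eq_mul₀ hN, Pi.smul_apply, smul_eq_mul, mul_assoc _ c]

lemma isRadialMultiplicative_iff_forall_finite_support (o : T.Plus) (φ : V → ℂ) :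
    IsRadialMultiplicative T.plusDist o (fun y => φ y) ↔
      ∀ F G : ℕ → ℂ, (Function.support F).Finite → (Function.support G).Finite →
        (∑ᶠ v ∈ {v : V | T.eps v = true},
          (∑ᶠ w ∈ {w : V | T.eps w = true}, F (T.G.dist v w) * G (T.G.dist o w)) * φ v) =
        (∑ᶠ v ∈ {v : V | T.eps v = true}, F (T.G.dist o v) * φ v) *
          (∑ᶠ v ∈ {v : V | T.eps v = true}, G (T.G.dist o v) * φ v) := by
  simp only [← finsum_set_coe_eq_finsum_mem, IsRadialMultiplicative,
    radialOp_radialOp T.finite_plusDist_sphere T.plusDist_comm]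
  refine ⟨fun h F G hF hG => ?_, fun h F G => h F G F.hasFiniteSupport G.hasFiniteSupport⟩
  lift F to ℕ →₀ ℂ using hF
  lift G to ℕ →₀ ℂ using hG
  exact h F G

end SemiHomTree

theorem stmt_15_general {qp qm : ℕ} (hqm : qm ≠ 0) {V : Type}
    (T : SemiHomTree qp qm V) (v0 : V) (hv0 : T.eps v0 = true)
    (φ : V → ℂ) (F : ℕ → ℂ)
    (hrad : ∀ v : V, T.eps v = true → φ v = F (T.G.dist v0 v))
    (hne : ∃ v : V, T.eps v = true ∧ φ v ≠ 0) :
    (φ v0 = 1 ∧ ∀ v : V, T.eps v = true → Mop T 2 φ v = F 2 * φ v) ↔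
      (∀ F1 G1 : ℕ → ℂ,
        (Function.support F1).Finite → (Function.support G1).Finite →
        (∑ᶠ v ∈ {v : V | T.eps v = true},
          (∑ᶠ w ∈ {w : V | T.eps w = true}, F1 (T.G.dist v w) * G1 (T.G.dist v0 w)) * φ v) =
        (∑ᶠ v ∈ {v : V | T.eps v = true}, F1 (T.G.dist v0 v) * φ v) *
          (∑ᶠ v ∈ {v : V | T.eps v = true}, G1 (T.G.dist v0 v) * φ v)) := by
  let o : T.Plus := ⟨v0, hv0⟩
  have hprofile : (fun y : T.Plus => φ y) = fun y => F (T.plusDist o y) :=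
    funext fun y => hrad y y.2
  have hnonzero : (fun y : T.Plus => φ y) ≠ 0 := by
    obtain ⟨v, hv, hv_ne⟩ := hne
    exact Function.ne_iff.2 ⟨⟨v, hv⟩, hv_ne⟩
  rw [T.forall_Mop_two_eq_iff hqm]
  exact (T.isRadialMultiplicative_iff hprofile hnonzero).symm.trans
    (T.isRadialMultiplicative_iff_forall_finite_support o φ)

theorem stmt_15 {qp qm : ℕ} (hqp : 2 ≤ qp) (hqm : 2 ≤ qm) {V : Type}
    (T : SemiHomTree qp qm V) (v0 : V) (hv0 : T.eps v0 = true)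
    (φ : V → ℂ) (F : ℕ → ℂ)
    (hrad : ∀ v : V, T.eps v = true → φ v = F (T.G.dist v0 v))
    (hne : ∃ v : V, T.eps v = true ∧ φ v ≠ 0) :
    (φ v0 = 1 ∧ ∀ v : V, T.eps v = true → Mop T 2 φ v = F 2 * φ v) ↔
      (∀ F1 G1 : ℕ → ℂ,
        (Function.support F1).Finite → (Function.support G1).Finite →
        (∑ᶠ v ∈ {v : V | T.eps v = true},
          (∑ᶠ w ∈ {w : V | T.eps w = true}, F1 (T.G.dist v w) * G1 (T.G.dist v0 w)) * φ v) =
        (∑ᶠ v ∈ {v : V | T.eps v = true}, F1 (T.G.dist v0 v) * φ v) *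
          (∑ᶠ v ∈ {v : V | T.eps v = true}, G1 (T.G.dist v0 v) * φ v)) :=
  stmt_15_general (by omega) T v0 hv0 φ F hrad hne
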